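/- Let a < b, let α, β ∈ (0,1] with α + β > 1, let f ∈ C^{0,α}([a,b]) and g ∈ C^{0,β}([a,b]), and let α' ∈ (0,α], β' ∈ (0,β] satisfy α' + β' > 1. Then there exists a real number I (the Young integral ∫_a^b f dg) such that for every pair of sequences of Lipschitz functions f_k, g_k : [a,b] → ℝ with ‖f_k − f‖_{C^{0,α'}} → 0 and ‖g_k − g‖_{C^{0,β'}} → 0, one has ∫_a^b f_k(x)·g_k'(x) dx → I as k → ∞; moreover I does not depend on the choice of α' and β'. In addition, there is a constant C, depending only on α, β, α', β' and b − a, such that if f̃ ∈ C^{0,α}([a,b]), g̃ ∈ C^{0,β}([a,b]) and Ĩ denotes the corresponding Young integral ∫_a^b f̃ dg̃, then |I − Ĩ| ≤ C·( ‖f − f̃‖_{C^{0,α}}·[g]_β + ‖f̃‖_{C^{0,α}}·[g − g̃]_β ). -/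

import Mathlib

open Set

/-- `h` is Lipschitz on `[a,b]`. -/
def LipOn (a b : ℝ) (h : ℝ → ℝ) : Prop :=
  ∃ L : NNReal, LipschitzOnWith L h (Icc a b)

/-- The sequence `hk` converges to `h` in the `C^{0,γ}([a,b])` norm. -/
def ConvH (γ a b : ℝ) (hk : ℕ → ℝ → ℝ) (h : ℝ → ℝ) : Prop :=
  ∀ δ : ℝ, 0 < δ → ∃ N : ℕ, ∀ k ≥ N,
    (∀ x ∈ Icc a b, |hk k x - h x| ≤ δ) ∧
    (∀ x ∈ Icc a b, ∀ y ∈ Icc a b,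
      |(hk k x - h x) - (hk k y - h y)| ≤ δ * |x - y| ^ γ)

/-- `I` is the Young integral `∫_a^b f dg`: for every admissible pair of exponents
`(α', β')` and every pair of sequences of Lipschitz functions converging to `f` and `g` in
`C^{0,α'}` resp. `C^{0,β'}`, the integrals `∫_a^b f_k g_k'` converge to `I`.  In particular
`I` does not depend on the choice of `α'` and `β'`. -/
def IsYoungIntegral (a b α β : ℝ) (f g : ℝ → ℝ) (I : ℝ) : Prop :=
  ∀ α' β' : ℝ, 0 < α' → α' ≤ α → 0 < β' → β' ≤ β → 1 < α' + β' →
    ∀ fk gk : ℕ → ℝ → ℝ,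
      (∀ k, LipOn a b (fk k)) → (∀ k, LipOn a b (gk k)) →
      ConvH α' a b fk f → ConvH β' a b gk g →
      Filter.Tendsto (fun k => ∫ x in a..b, fk k x * deriv (gk k) x)
        Filter.atTop (nhds I)

/-! Halving the mesh changes the left-point Riemann–Stieltjes sum of `∫ f dg` only by products
`δf · δg` of increments over the same scale, in total `O((2 ^ (1 - (α + β))) ^ n)` at the `n`-th
dyadic level. As `α + β > 1`, the dyadic sums converge, and their limit is bounded by a multiple of
`‖f‖_{C^{0,α}} [g]_β`. For Lipschitz `f`, `g` the limit is `∫ f g'`, so bilinearity turns this bound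
into convergence of `∫ f_k g_k'` and into the stability estimate. The limit is characterised by its
Lipschitz approximations because these exist: averages over short intervals are Lipschitz and
converge uniformly with bounded Hölder seminorm, hence, by interpolation, in every weaker Hölder
norm. -/

open Filter MeasureTheory
open scoped NNReal Topology

variable {a b : ℝ}

section Holder

variable {X E : Type*} [PseudoMetricSpace X] [SeminormedAddCommGroup E] {C C' γ : ℝ≥0}
  {f g : X → E} {s : Set X}

theorem holderOnWith_iff_norm_sub_le :
    HolderOnWith C γ f s ↔ ∀ x ∈ s, ∀ y ∈ s, ‖f x - f y‖ ≤ C * dist x y ^ (γ : ℝ) := by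
  refine ⟨fun hf x hx y hy => dist_eq_norm (f x) (f y) ▸ hf.dist_le hx hy,
    fun hf x hx y hy => ?_⟩
  rw [edist_nndist, edist_nndist, ← ENNReal.coe_rpow_of_nonneg _ γ.coe_nonneg, ← ENNReal.coe_mul,
    ENNReal.coe_le_coe, ← NNReal.coe_le_coe]
  simpa [dist_eq_norm (f x)] using hf x hx y hy

theorem holderOnWith_add (hf : HolderOnWith C γ f s) (hg : HolderOnWith C' γ g s) :
    HolderOnWith (C + C') γ (f + g) s :=
  HolderWith.restrict_iff.1
    ((HolderWith.restrict_iff.2 hf).add (HolderWith.restrict_iff.2 hg))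

theorem holderOnWith_sub (hf : HolderOnWith C γ f s) (hg : HolderOnWith C' γ g s) :
    HolderOnWith (C + C') γ (f - g) s := by
  rw [holderOnWith_iff_norm_sub_le] at hf hg ⊢
  intro x hx y hy
  rw [Pi.sub_apply, Pi.sub_apply, sub_sub_sub_comm, NNReal.coe_add, add_mul]
  exact norm_sub_le_of_le (hf x hx y hy) (hg x hx y hy)

theorem nonneg_of_norm_sub_le_mul_rpow {h : ℝ → E} {M γ : ℝ} (hab : a < b)
    (hh : ∀ x ∈ Icc a b, ∀ y ∈ Icc a b, ‖h x - h y‖ ≤ M * |x - y| ^ γ) : 0 ≤ M := by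
  have hpos : 0 < |a - b| ^ γ := Real.rpow_pos_of_pos (abs_pos.2 (sub_ne_zero.2 hab.ne)) γ
  exact nonneg_of_mul_nonneg_left ((norm_nonneg _).trans
    (hh a (left_mem_Icc.2 hab.le) b (right_mem_Icc.2 hab.le))) hpos

end Holder

section DyadicPoint

/-- The `i`-th point of the partition of `[a, b]` into `2 ^ n` equal pieces. -/
noncomputable def dyadicPoint (a b : ℝ) (n i : ℕ) : ℝ :=
  a + i * ((b - a) / 2 ^ n)

variable {E : Type*} [SeminormedAddCommGroup E] {n i : ℕ}

theorem dyadicPoint_zero : dyadicPoint a b n 0 = a := by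
  simp [dyadicPoint]

theorem dyadicPoint_two_pow : dyadicPoint a b n (2 ^ n) = b := by
  rw [dyadicPoint, Nat.cast_pow, Nat.cast_ofNat, mul_div_cancel₀ _ (by positivity),
    add_sub_cancel]

theorem dyadicPoint_succ_two_mul : dyadicPoint a b (n + 1) (2 * i) = dyadicPoint a b n i := by
  simp only [dyadicPoint, Nat.cast_mul, Nat.cast_ofNat, pow_succ]
  field_simp

theorem dyadicPoint_succ_sub :
    dyadicPoint a b n (i + 1) - dyadicPoint a b n i = (b - a) / 2 ^ n := by
  simp only [dyadicPoint, Nat.cast_succ]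
  ring

theorem dyadicPoint_le_succ (hab : a ≤ b) : dyadicPoint a b n i ≤ dyadicPoint a b n (i + 1) := by
  have : 0 ≤ (b - a) / 2 ^ n := div_nonneg (sub_nonneg.2 hab) (by positivity)
  linarith [dyadicPoint_succ_sub (a := a) (b := b) (n := n) (i := i)]

theorem dyadicPoint_mem_Icc (hab : a ≤ b) (hi : i ≤ 2 ^ n) : dyadicPoint a b n i ∈ Icc a b := by
  have hmono : Monotone (dyadicPoint a b n) := monotone_nat_of_le_succ fun _ =>
    dyadicPoint_le_succ hab
  exact ⟨dyadicPoint_zero.symm.trans_le (hmono (Nat.zero_le i)),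
    (hmono hi).trans_eq dyadicPoint_two_pow⟩

theorem dist_dyadicPoint_succ (hab : a ≤ b) :
    dist (dyadicPoint a b n (i + 1)) (dyadicPoint a b n i) = (b - a) / 2 ^ n := by
  rw [Real.dist_eq, dyadicPoint_succ_sub, abs_of_nonneg]
  exact div_nonneg (sub_nonneg.2 hab) (by positivity)

theorem norm_sub_dyadicPoint_le {C γ : ℝ≥0} {h : ℝ → E} (hab : a ≤ b)
    (hh : HolderOnWith C γ h (Icc a b)) (hi : i < 2 ^ n) :
    ‖h (dyadicPoint a b n (i + 1)) - h (dyadicPoint a b n i)‖ ≤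
      C * ((b - a) / 2 ^ n) ^ (γ : ℝ) := by
  simpa only [dist_dyadicPoint_succ hab] using holderOnWith_iff_norm_sub_le.1 hh _
    (dyadicPoint_mem_Icc hab hi) _ (dyadicPoint_mem_Icc hab hi.le)

end DyadicPoint

theorem sum_range_two_mul {M : Type*} [AddCommMonoid M] (u : ℕ → M) (m : ℕ) :
    ∑ i ∈ Finset.range (2 * m), u i = ∑ i ∈ Finset.range m, (u (2 * i) + u (2 * i + 1)) := by
  induction m with
  | zero => simp
  | succ m ih => rw [mul_add_one, Finset.sum_range_succ, Finset.sum_range_succ, ih,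
      Finset.sum_range_succ, add_assoc]

section DyadicSum

variable {E F G : Type*} [NormedAddCommGroup E] [NormedSpace ℝ E] [NormedAddCommGroup F]
  [NormedSpace ℝ F] [NormedAddCommGroup G] [NormedSpace ℝ G]

/-- The left-point Riemann–Stieltjes sum of `∫ B(f, dg)` over the `n`-th dyadic partition of
`[a, b]`. -/
noncomputable def dyadicSum (B : E →L[ℝ] F →L[ℝ] G) (a b : ℝ) (f : ℝ → E) (g : ℝ → F)
    (n : ℕ) : G :=
  ∑ i ∈ Finset.range (2 ^ n), B (f (dyadicPoint a b n i))
    (g (dyadicPoint a b n (i + 1)) - g (dyadicPoint a b n i))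

variable {B : E →L[ℝ] F →L[ℝ] G} {f ft : ℝ → E} {g gt : ℝ → F} {n : ℕ}

theorem dyadicSum_zero : dyadicSum B a b f g 0 = B (f a) (g b - g a) := by
  simp [dyadicSum, dyadicPoint]

theorem dyadicSum_sub_dyadicSum :
    dyadicSum B a b f g n - dyadicSum B a b ft gt n =
      dyadicSum B a b (f - ft) g n + dyadicSum B a b ft (g - gt) n := by
  simp only [dyadicSum, ← Finset.sum_sub_distrib, ← Finset.sum_add_distrib]
  refine Finset.sum_congr rfl fun i _ => ?_
  simp only [Pi.sub_apply, map_sub, sub_apply]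
  abel

/- Each interval of the coarse partition contributes only the product of the increments of `f` and
`g` over its two halves: this second-order term is what makes `α + β > 1` the right condition. -/
theorem dyadicSum_succ_sub :
    dyadicSum B a b f g (n + 1) - dyadicSum B a b f g n =
      ∑ i ∈ Finset.range (2 ^ n),
        B (f (dyadicPoint a b (n + 1) (2 * i + 1)) - f (dyadicPoint a b (n + 1) (2 * i)))
          (g (dyadicPoint a b (n + 1) (2 * i + 1 + 1)) -
            g (dyadicPoint a b (n + 1) (2 * i + 1))) := by
  rw [dyadicSum, pow_succ', sum_range_two_mul, dyadicSum, ← Finset.sum_sub_distrib]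
  refine Finset.sum_congr rfl fun i _ => ?_
  rw [← dyadicPoint_succ_two_mul (i := i), ← dyadicPoint_succ_two_mul (i := i + 1), mul_add_one]
  simp only [map_sub, sub_apply]
  abel

variable {Cf Cg α β : ℝ≥0}

theorem norm_dyadicSum_succ_sub_le (hab : a ≤ b) (hf : HolderOnWith Cf α f (Icc a b))
    (hg : HolderOnWith Cg β g (Icc a b)) (n : ℕ) :
    ‖dyadicSum B a b f g (n + 1) - dyadicSum B a b f g n‖ ≤
      2 ^ n * (‖B‖ * (Cf * ((b - a) / 2 ^ (n + 1)) ^ (α : ℝ)) *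
        (Cg * ((b - a) / 2 ^ (n + 1)) ^ (β : ℝ))) := by
  rw [dyadicSum_succ_sub]
  refine (norm_sum_le_of_le _ fun i hi => ?_).trans_eq
    (by rw [Finset.sum_const, Finset.card_range, nsmul_eq_mul, Nat.cast_pow, Nat.cast_ofNat])
  have hi : 2 * i + 1 < 2 ^ (n + 1) := by
    rw [pow_succ']
    have := Finset.mem_range.1 hi
    omega
  exact B.le_of_opNorm₂_le_of_le le_rfl
    (norm_sub_dyadicPoint_le hab hf (Nat.lt_of_succ_lt hi)) (norm_sub_dyadicPoint_le hab hg hi)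

theorem dist_dyadicSum_succ_le_geometric (hab : a ≤ b) (hf : HolderOnWith Cf α f (Icc a b))
    (hg : HolderOnWith Cg β g (Icc a b)) (hαβ : 1 < α + β) (n : ℕ) :
    dist (dyadicSum B a b f g n) (dyadicSum B a b f g (n + 1)) ≤
      ‖B‖ * (Cf * Cg) * ((b - a) / 2) ^ (α + β : ℝ) * ((2 : ℝ) ^ (1 - (α + β) : ℝ)) ^ n := by
  have hθ : (α + β : ℝ) ≠ 0 := by exact_mod_cast (zero_lt_one.trans hαβ).ne'
  have hh : 0 ≤ (b - a) / 2 ^ (n + 1) := div_nonneg (sub_nonneg.2 hab) (by positivity)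
  rw [dist_comm, dist_eq_norm]
  refine (norm_dyadicSum_succ_sub_le hab hf hg n).trans_eq ?_
  have hscale : (2 : ℝ) ^ n * ((b - a) / 2 ^ (n + 1)) ^ (α + β : ℝ) =
      ((b - a) / 2) ^ (α + β : ℝ) * ((2 : ℝ) ^ (1 - (α + β) : ℝ)) ^ n := by
    rw [pow_succ', ← div_div, Real.div_rpow (by linarith) (by positivity), ← Real.rpow_natCast,
      ← Real.rpow_natCast, ← Real.rpow_mul two_pos.le, ← Real.rpow_mul two_pos.le, sub_mul,
      one_mul, Real.rpow_sub two_pos, mul_comm (n : ℝ)]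
    ring
  rw [mul_assoc _ (_ ^ _), ← hscale, Real.rpow_add' hh hθ]
  ring

theorem two_rpow_one_sub_lt_one (hαβ : 1 < α + β) : (2 : ℝ) ^ (1 - (α + β) : ℝ) < 1 :=
  Real.rpow_lt_one_of_one_lt_of_neg one_lt_two (sub_neg.2 (by exact_mod_cast hαβ))

theorem exists_tendsto_dyadicSum [CompleteSpace G] (hab : a ≤ b)
    (hf : HolderOnWith Cf α f (Icc a b)) (hg : HolderOnWith Cg β g (Icc a b))
    (hαβ : 1 < α + β) : ∃ I, Tendsto (dyadicSum B a b f g) atTop (𝓝 I) :=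
  cauchySeq_tendsto_of_complete (cauchySeq_of_le_geometric _ _ (two_rpow_one_sub_lt_one hαβ)
    (dist_dyadicSum_succ_le_geometric hab hf hg hαβ))

theorem norm_limit_dyadicSum_sub_le {I : G} (hab : a ≤ b)
    (hf : HolderOnWith Cf α f (Icc a b)) (hg : HolderOnWith Cg β g (Icc a b))
    (hαβ : 1 < α + β) (hI : Tendsto (dyadicSum B a b f g) atTop (𝓝 I)) :
    ‖I - B (f a) (g b - g a)‖ ≤
      ‖B‖ * (Cf * Cg) * ((b - a) / 2) ^ (α + β : ℝ) / (1 - 2 ^ (1 - (α + β) : ℝ)) := by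
  rw [← dyadicSum_zero, ← dist_eq_norm, dist_comm]
  exact dist_le_of_le_geometric_of_tendsto₀ _ _ (two_rpow_one_sub_lt_one hαβ)
    (dist_dyadicSum_succ_le_geometric hab hf hg hαβ) hI

/-- The constant in the bound of `∫ B(f, dg)` over `[a, b]` by the product of the `C^{0,α}` norm of
`f` and the `β`-Hölder seminorm of `g`. -/
noncomputable def youngConst (B : E →L[ℝ] F →L[ℝ] G) (a b α β : ℝ) : ℝ :=
  ‖B‖ * ((b - a) ^ β + ((b - a) / 2) ^ (α + β) / (1 - 2 ^ (1 - (α + β))))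

theorem norm_limit_dyadicSum_le {I : G} (hab : a ≤ b)
    (hf : HolderOnWith Cf α f (Icc a b)) (hfa : ‖f a‖ ≤ Cf) (hg : HolderOnWith Cg β g (Icc a b))
    (hαβ : 1 < α + β) (hI : Tendsto (dyadicSum B a b f g) atTop (𝓝 I)) :
    ‖I‖ ≤ youngConst B a b α β * (Cf * Cg) := by
  have hgba : ‖g b - g a‖ ≤ Cg * (b - a) ^ (β : ℝ) := by
    simpa only [Real.dist_eq, abs_of_nonneg (sub_nonneg.2 hab)] using
      holderOnWith_iff_norm_sub_le.1 hg b (right_mem_Icc.2 hab) a (left_mem_Icc.2 hab)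
  calc ‖I‖ ≤ ‖B (f a) (g b - g a)‖ + ‖I - B (f a) (g b - g a)‖ := norm_le_norm_add_norm_sub' _ _
    _ ≤ ‖B‖ * Cf * (Cg * (b - a) ^ (β : ℝ)) +
        ‖B‖ * (Cf * Cg) * ((b - a) / 2) ^ (α + β : ℝ) / (1 - 2 ^ (1 - (α + β) : ℝ)) :=
      add_le_add (B.le_of_opNorm₂_le_of_le le_rfl hfa hgba)
        (norm_limit_dyadicSum_sub_le hab hf hg hαβ hI)
    _ = youngConst B a b α β * (Cf * Cg) := by
      rw [youngConst]
      ring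

theorem norm_limit_dyadicSum_sub_limit_dyadicSum_le [CompleteSpace G] {I It : G}
    {M₁ Mg Mt M₂ : ℝ≥0} (hab : a ≤ b) (hαβ : 1 < α + β)
    (hfft : HolderOnWith M₁ α (f - ft) (Icc a b)) (hffta : ‖f a - ft a‖ ≤ M₁)
    (hg : HolderOnWith Mg β g (Icc a b)) (hft : HolderOnWith Mt α ft (Icc a b))
    (hfta : ‖ft a‖ ≤ Mt) (hggt : HolderOnWith M₂ β (g - gt) (Icc a b))
    (hI : Tendsto (dyadicSum B a b f g) atTop (𝓝 I))
    (hIt : Tendsto (dyadicSum B a b ft gt) atTop (𝓝 It)) :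
    ‖I - It‖ ≤ youngConst B a b α β * (M₁ * Mg + Mt * M₂) := by
  obtain ⟨I₁, hI₁⟩ := exists_tendsto_dyadicSum (B := B) hab hfft hg hαβ
  obtain ⟨I₂, hI₂⟩ := exists_tendsto_dyadicSum (B := B) hab hft hggt hαβ
  have hsplit : I - It = I₁ + I₂ := tendsto_nhds_unique (hI.sub hIt)
    ((hI₁.add hI₂).congr fun _ => dyadicSum_sub_dyadicSum.symm)
  calc ‖I - It‖ ≤ ‖I₁‖ + ‖I₂‖ := hsplit ▸ norm_add_le _ _
    _ ≤ youngConst B a b α β * (M₁ * Mg) + youngConst B a b α β * (Mt * M₂) :=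
      add_le_add (norm_limit_dyadicSum_le hab hfft hffta hg hαβ hI₁)
        (norm_limit_dyadicSum_le hab hft hfta hggt hαβ hI₂)
    _ = _ := (mul_add _ _ _).symm

end DyadicSum

section Lipschitz

variable {E F G : Type*} [NormedAddCommGroup E] [NormedSpace ℝ E] [NormedAddCommGroup F]
  [NormedSpace ℝ F] [NormedAddCommGroup G] [NormedSpace ℝ G] {B : E →L[ℝ] F →L[ℝ] G}
  {f : ℝ → E} {g : ℝ → F} {K L : ℝ≥0} {u v : ℝ}

theorem intervalIntegrable_deriv_of_lipschitzOnWith [CompleteSpace F] (huv : u ≤ v)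
    (hg : LipschitzOnWith K g (Icc u v)) : IntervalIntegrable (deriv g) volume u v := by
  rw [intervalIntegrable_iff_integrableOn_Ioo_of_le huv]
  refine Measure.integrableOn_of_bounded (M := K) measure_Ioo_lt_top.ne
    (aestronglyMeasurable_deriv g _)
    ((ae_restrict_iff' measurableSet_Ioo).2 (.of_forall fun x hx => ?_))
  exact norm_deriv_le_of_lipschitzOn (Icc_mem_nhds hx.1 hx.2) hg

theorem intervalIntegrable_bilin_deriv_of_lipschitzOnWith [CompleteSpace F] (huv : u ≤ v)
    (hf : ContinuousOn f (Icc u v)) (hg : LipschitzOnWith K g (Icc u v)) :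
    IntervalIntegrable (fun x => B (f x) (deriv g x)) volume u v := by
  obtain ⟨A, hA⟩ := isCompact_Icc.exists_bound_of_continuousOn hf
  rw [intervalIntegrable_iff_integrableOn_Icc_of_le huv]
  exact B.integrable_of_bilin_of_bdd_left A (hf.aestronglyMeasurable measurableSet_Icc)
    ((ae_restrict_iff' measurableSet_Icc).2 (.of_forall hA))
    ((intervalIntegrable_iff_integrableOn_Icc_of_le huv).1
      (intervalIntegrable_deriv_of_lipschitzOnWith huv hg))

theorem integral_deriv_eq_sub_of_lipschitzOnWith [FiniteDimensional ℝ F] (huv : u ≤ v)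
    (hg : LipschitzOnWith K g (Icc u v)) : ∫ x in u..v, deriv g x = g v - g u := by
  have := FiniteDimensional.complete ℝ F
  have hdiff : ∀ᵐ x, x ∈ uIoc u v → DifferentiableAt ℝ g x := by
    have hbv : BoundedVariationOn g (uIcc u v) := by
      simpa only [uIcc_of_le huv, inter_self] using
        hg.locallyBoundedVariationOn u v (left_mem_Icc.2 huv) (right_mem_Icc.2 huv)
    filter_upwards [hbv.ae_differentiableAt_of_mem_uIcc] with x hx hxuv
    exact hx (uIoc_subset_uIcc hxuv)
  refine (SeparatingDual.eq_iff_forall_dual_eq (R := ℝ)).2 fun φ => ?_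
  have hφg : LipschitzOnWith (‖φ‖₊ * K) (φ ∘ g) (uIcc u v) :=
    uIcc_of_le huv ▸ φ.lipschitz.comp_lipschitzOnWith hg
  calc φ (∫ x in u..v, deriv g x) = ∫ x in u..v, φ (deriv g x) :=
      (φ.intervalIntegral_comp_comm (intervalIntegrable_deriv_of_lipschitzOnWith huv hg)).symm
    _ = ∫ x in u..v, deriv (φ ∘ g) x := intervalIntegral.integral_congr_ae
      (hdiff.mono fun x hx hxuv =>
        (φ.hasFDerivAt.comp_hasDerivAt x (hx hxuv).hasDerivAt).deriv.symm)
    _ = φ (g v - g u) := by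
      rw [hφg.absolutelyContinuousOnInterval.integral_deriv_eq_sub, map_sub]
      rfl

theorem norm_bilin_sub_integral_le [FiniteDimensional ℝ F] [CompleteSpace G] (huv : u ≤ v)
    (hf : LipschitzOnWith L f (Icc u v)) (hg : LipschitzOnWith K g (Icc u v)) :
    ‖B (f u) (g v - g u) - ∫ x in u..v, B (f x) (deriv g x)‖ ≤ ‖B‖ * L * K * (v - u) ^ 2 := by
  have := FiniteDimensional.complete ℝ F
  have hdiff : B (f u) (g v - g u) - ∫ x in u..v, B (f x) (deriv g x) =
      ∫ x in u..v, B (f u - f x) (deriv g x) := by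
    rw [← integral_deriv_eq_sub_of_lipschitzOnWith huv hg,
      ← (B (f u)).intervalIntegral_comp_comm (intervalIntegrable_deriv_of_lipschitzOnWith huv hg),
      ← intervalIntegral.integral_sub
        (intervalIntegrable_bilin_deriv_of_lipschitzOnWith huv continuousOn_const hg)
        (intervalIntegrable_bilin_deriv_of_lipschitzOnWith huv hf.continuousOn hg)]
    simp only [map_sub, sub_apply]
  have hbound : ∀ᵐ x, x ∈ uIoc u v → ‖B (f u - f x) (deriv g x)‖ ≤ ‖B‖ * (L * (v - u)) * K := by
    filter_upwards [Measure.ae_ne volume v] with x hxv hx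
    rw [uIoc_of_le huv] at hx
    have hfx : ‖f u - f x‖ ≤ L * (v - u) := by
      refine (hf.norm_sub_le (left_mem_Icc.2 huv) (Ioc_subset_Icc_self hx)).trans ?_
      rw [norm_sub_rev, Real.norm_of_nonneg (sub_nonneg.2 hx.1.le)]
      gcongr
      exact hx.2
    exact B.le_of_opNorm₂_le_of_le le_rfl hfx
      (norm_deriv_le_of_lipschitzOn (Icc_mem_nhds hx.1 (lt_of_le_of_ne hx.2 hxv)) hg)
  rw [hdiff]
  refine (intervalIntegral.norm_integral_le_of_norm_le_const_ae hbound).trans_eq ?_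
  rw [abs_of_nonneg (sub_nonneg.2 huv)]
  ring

theorem norm_dyadicSum_sub_integral_le [FiniteDimensional ℝ F] [CompleteSpace G] (hab : a ≤ b)
    (hf : LipschitzOnWith L f (Icc a b)) (hg : LipschitzOnWith K g (Icc a b)) (n : ℕ) :
    ‖dyadicSum B a b f g n - ∫ x in a..b, B (f x) (deriv g x)‖ ≤
      ‖B‖ * L * K * (b - a) ^ 2 * (1 / 2) ^ n := by
  have := FiniteDimensional.complete ℝ F
  have hsub : ∀ i < 2 ^ n, Icc (dyadicPoint a b n i) (dyadicPoint a b n (i + 1)) ⊆ Icc a b :=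
    fun i hi => Icc_subset_Icc (dyadicPoint_mem_Icc hab hi.le).1 (dyadicPoint_mem_Icc hab hi).2
  have hint : ∫ x in a..b, B (f x) (deriv g x) = ∑ i ∈ Finset.range (2 ^ n),
      ∫ x in dyadicPoint a b n i..dyadicPoint a b n (i + 1), B (f x) (deriv g x) := by
    rw [intervalIntegral.sum_integral_adjacent_intervals (a := dyadicPoint a b n) fun i hi =>
      intervalIntegrable_bilin_deriv_of_lipschitzOnWith (dyadicPoint_le_succ hab)
        (hf.mono (hsub i hi)).continuousOn (hg.mono (hsub i hi)),
      dyadicPoint_zero, dyadicPoint_two_pow]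
  rw [hint, dyadicSum, ← Finset.sum_sub_distrib]
  refine (norm_sum_le_of_le _ fun i hi => norm_bilin_sub_integral_le (dyadicPoint_le_succ hab)
    (hf.mono (hsub i (Finset.mem_range.1 hi)))
    (hg.mono (hsub i (Finset.mem_range.1 hi)))).trans_eq ?_
  simp only [dyadicPoint_succ_sub, Finset.sum_const, Finset.card_range, nsmul_eq_mul, Nat.cast_pow,
    Nat.cast_ofNat, one_div, inv_pow]
  field_simp

theorem tendsto_dyadicSum_integral [FiniteDimensional ℝ F] [CompleteSpace G] (hab : a ≤ b)
    (hf : LipschitzOnWith L f (Icc a b)) (hg : LipschitzOnWith K g (Icc a b)) :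
    Tendsto (dyadicSum B a b f g) atTop (𝓝 (∫ x in a..b, B (f x) (deriv g x))) := by
  refine tendsto_iff_norm_sub_tendsto_zero.2
    (squeeze_zero (fun _ => norm_nonneg _) (norm_dyadicSum_sub_integral_le hab hf hg) ?_)
  simpa only [mul_zero] using (tendsto_pow_atTop_nhds_zero_of_lt_one (by norm_num)
    (by norm_num : (1 / 2 : ℝ) < 1)).const_mul (‖B‖ * L * K * (b - a) ^ 2)

end Lipschitz

section Average

variable {E : Type*} [NormedAddCommGroup E] [NormedSpace ℝ E] {M γ h : ℝ≥0} {H : ℝ → E}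

theorem interval_average_add_right (x : ℝ) :
    ⨍ t in x..x + h, H t = (h : ℝ)⁻¹ • ∫ t in (0 : ℝ)..h, H (x + t) := by
  rw [interval_average_eq, add_sub_cancel_left, intervalIntegral.integral_comp_add_left, add_zero]

theorem lipschitzWith_interval_average (hγ : 0 < γ) (hH : HolderWith M γ H) :
    LipschitzWith (M * h ^ (γ : ℝ) / h) fun x : ℝ => ⨍ t in x..x + h, H t := by
  have hint (u v : ℝ) : IntervalIntegrable H volume u v := (hH.continuous hγ).intervalIntegrable u v
  refine LipschitzWith.of_dist_le_mul fun x y => ?_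
  have hinth : IntervalIntegrable (fun t => H (t + h)) volume y x :=
    ((hH.continuous hγ).comp (by fun_prop)).intervalIntegrable y x
  have hshift : (∫ t in x..x + h, H t) - ∫ t in y..y + h, H t = ∫ t in y..x, H (t + h) - H t := by
    rw [intervalIntegral.integral_sub hinth (hint y x), intervalIntegral.integral_comp_add_right,
      intervalIntegral.integral_interval_sub_interval_comm' (hint _ _) (hint _ _) (hint _ _)]
  have hbound : ‖∫ t in y..x, H (t + h) - H t‖ ≤ M * h ^ (γ : ℝ) * |x - y| := by
    refine intervalIntegral.norm_integral_le_of_norm_le_const fun t _ => ?_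
    simpa [dist_eq_norm] using hH.dist_le (t + h) t
  simp only [interval_average_eq, add_sub_cancel_left]
  rw [dist_eq_norm, ← smul_sub, hshift, norm_smul, norm_inv, NNReal.norm_eq, NNReal.coe_div,
    NNReal.coe_mul, NNReal.coe_rpow, div_eq_inv_mul, mul_assoc, Real.dist_eq]
  gcongr

theorem norm_inv_smul_integral_le {φ : ℝ → E} {c : ℝ} (hc : 0 ≤ c)
    (hφ : ∀ t ∈ Ioc (0 : ℝ) h, ‖φ t‖ ≤ c) : ‖(h : ℝ)⁻¹ • ∫ t in (0 : ℝ)..h, φ t‖ ≤ c := by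
  rw [norm_smul, norm_inv, NNReal.norm_eq]
  refine (mul_le_mul_of_nonneg_left (intervalIntegral.norm_integral_le_of_norm_le_const
    (by rwa [uIoc_of_le h.coe_nonneg])) (by positivity)).trans ?_
  rw [sub_zero, NNReal.abs_eq, mul_left_comm]
  exact mul_le_of_le_one_right hc inv_mul_le_one

theorem holderWith_interval_average (hγ : 0 < γ) (hH : HolderWith M γ H) :
    HolderWith M γ fun x : ℝ => ⨍ t in x..x + h, H t := by
  have hint (x : ℝ) : IntervalIntegrable (fun t => H (x + t)) volume 0 h :=
    ((hH.continuous hγ).comp (by fun_prop)).intervalIntegrable 0 h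
  refine holderOnWith_univ.1 (holderOnWith_iff_norm_sub_le.2 fun x _ y _ => ?_)
  rw [interval_average_add_right, interval_average_add_right, ← smul_sub,
    ← intervalIntegral.integral_sub (hint x) (hint y)]
  refine norm_inv_smul_integral_le (by positivity) fun t _ => ?_
  simpa [dist_eq_norm] using hH.dist_le (x + t) (y + t)

theorem norm_interval_average_sub_le [CompleteSpace E] (hγ : 0 < γ) (hH : HolderWith M γ H)
    (hh : 0 < h) (x : ℝ) : ‖(⨍ t in x..x + h, H t) - H x‖ ≤ M * h ^ (γ : ℝ) := by
  have hint : IntervalIntegrable (fun t => H (x + t)) volume 0 h :=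
    ((hH.continuous hγ).comp (by fun_prop)).intervalIntegrable 0 h
  have hconst : H x = (h : ℝ)⁻¹ • ∫ _ in (0 : ℝ)..h, H x := by
    rw [intervalIntegral.integral_const, sub_zero, inv_smul_smul₀ (by exact_mod_cast hh.ne')]
  rw [interval_average_add_right, hconst, ← smul_sub,
    ← intervalIntegral.integral_sub hint intervalIntegrable_const]
  refine norm_inv_smul_integral_le (by positivity) fun t ht => ?_
  rw [← dist_eq_norm]
  refine hH.dist_le_of_le ?_
  simpa [abs_of_pos ht.1] using ht.2

end Average

section TendstoHolder

variable {E : Type*} [NormedAddCommGroup E] {C M γ γ' : ℝ≥0} {hk : ℕ → ℝ → E} {h : ℝ → E}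

/-- Convergence of a sequence of functions in the `C^{0,γ}` norm on `[a, b]`; the vector-valued form
of `ConvH`. -/
def TendstoHolder (γ a b : ℝ) (hk : ℕ → ℝ → E) (h : ℝ → E) : Prop :=
  ∀ δ : ℝ, 0 < δ → ∃ N : ℕ, ∀ k ≥ N,
    (∀ x ∈ Icc a b, ‖hk k x - h x‖ ≤ δ) ∧
    (∀ x ∈ Icc a b, ∀ y ∈ Icc a b,
      ‖(hk k x - h x) - (hk k y - h y)‖ ≤ δ * |x - y| ^ γ)

theorem tendstoHolder_iff :
    TendstoHolder γ a b hk h ↔ ∀ δ : ℝ≥0, 0 < δ → ∀ᶠ k in atTop,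
      (∀ x ∈ Icc a b, ‖hk k x - h x‖ ≤ δ) ∧ HolderOnWith δ γ (hk k - h) (Icc a b) := by
  simp only [TendstoHolder, eventually_atTop, holderOnWith_iff_norm_sub_le, NNReal.forall,
    Pi.sub_apply, Real.dist_eq, NNReal.coe_mk]
  exact ⟨fun H δ _ hpos => H δ hpos, fun H δ hpos => H δ hpos.le hpos⟩

theorem tendstoHolder_of_tendstoUniformlyOn (hC : ∀ k, HolderOnWith C γ (hk k - h) (Icc a b))
    (hunif : TendstoUniformlyOn hk h atTop (Icc a b)) (hγ : γ' < γ) :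
    TendstoHolder γ' a b hk h := by
  refine tendstoHolder_iff.2 fun δ hδ => ?_
  obtain ⟨t, ht⟩ : ∃ t, γ' / γ + t = 1 :=
    ⟨1 - γ' / γ, add_tsub_cancel_of_le (div_le_one_of_le₀ hγ.le zero_le)⟩
  have hγt : γ * (γ' / γ) + 0 * t = γ' := by
    rw [zero_mul, add_zero, mul_div_cancel₀ _ (pos_of_gt hγ).ne']
  have ht0 : 0 < t := pos_of_ne_zero fun h0 => by
    rw [h0, add_zero, div_eq_one_iff_eq (pos_of_gt hγ).ne'] at ht
    exact hγ.ne ht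
  have hsmall : Tendsto (fun η : ℝ≥0 => C ^ ((γ' / γ : ℝ≥0) : ℝ) * (η + η) ^ (t : ℝ))
      (𝓝[>] 0) (𝓝 0) := by
    have : Continuous fun η : ℝ≥0 => C ^ ((γ' / γ : ℝ≥0) : ℝ) * (η + η) ^ (t : ℝ) := by
      have := NNReal.continuous_rpow_const t.coe_nonneg
      fun_prop
    simpa [ht0.ne'] using (this.tendsto 0).mono_left nhdsWithin_le_nhds
  obtain ⟨η, hηC, hη, hηδ⟩ := ((hsmall.eventually_le_const hδ).and
    (Ioo_mem_nhdsGT hδ)).exists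
  filter_upwards [Metric.tendstoUniformlyOn_iff.1 hunif η (NNReal.coe_pos.2 hη)] with k hclose
  have hsup : ∀ x ∈ Icc a b, ‖(hk k - h) x‖ ≤ η := fun x hx => by
    simpa [dist_eq_norm, norm_sub_rev] using (hclose x hx).le
  have hzero : HolderOnWith (η + η) 0 (hk k - h) (Icc a b) :=
    holderOnWith_iff_norm_sub_le.2 fun x hx y hy => by
      simpa using norm_sub_le_of_le (hsup x hx) (hsup y hy)
  exact ⟨fun x hx => (hsup x hx).trans (NNReal.coe_le_coe.2 hηδ.le),
    hγt ▸ ((hC k).interpolate hzero ht).mono_const hηC⟩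

theorem exists_holderWith_eqOn (hab : a ≤ b) (hh : HolderOnWith M γ h (Icc a b)) :
    ∃ H : ℝ → E, HolderWith M γ H ∧ EqOn H h (Icc a b) := by
  have hproj : HolderWith 1 1 fun x => (projIcc a b hab x : ℝ) :=
    holderWith_one.2 (LipschitzWith.projIcc hab)
  refine ⟨fun x => h (projIcc a b hab x), ?_, fun x hx => congrArg h ?_⟩
  · simpa [Function.comp_def] using hh.comp_holderWith hproj fun x => (projIcc a b hab x).2
  · rw [projIcc_of_mem hab hx]

theorem exists_lipschitzOnWith_tendstoHolder [NormedSpace ℝ E] [CompleteSpace E] (hab : a ≤ b)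
    (hh : HolderOnWith M γ h (Icc a b)) (hγ : γ' < γ) :
    ∃ hk : ℕ → ℝ → E, (∀ k, ∃ L : ℝ≥0, LipschitzOnWith L (hk k) (Icc a b)) ∧
      TendstoHolder γ' a b hk h := by
  obtain ⟨H, hH, hHh⟩ := exists_holderWith_eqOn hab hh
  have hγ0 : 0 < γ := pos_of_gt hγ
  let ε : ℕ → ℝ≥0 := fun k => 1 / (k + 1)
  let A : ℕ → ℝ → E := fun k x => ⨍ t in x..x + ε k, H t
  refine ⟨A, fun k => ⟨_, (lipschitzWith_interval_average hγ0 hH).lipschitzOnWith⟩,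
    tendstoHolder_of_tendstoUniformlyOn
      (fun k => holderOnWith_sub ((holderWith_interval_average hγ0 hH).holderOnWith _) hh) ?_ hγ⟩
  have hlim : Tendsto (fun k => (M * ε k ^ (γ : ℝ) : ℝ)) atTop (𝓝 0) := by
    have hcont : Continuous fun η : ℝ≥0 => (M * η ^ (γ : ℝ) : ℝ) :=
      continuous_const.mul (NNReal.continuous_coe.rpow_const fun _ => .inr γ.coe_nonneg)
    simpa [hγ0.ne', Function.comp_def, ε] using
      (hcont.tendsto 0).comp tendsto_one_div_add_atTop_nhds_zero_nat
  refine Metric.tendstoUniformlyOn_iff.2 fun δ hδ => ?_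
  filter_upwards [hlim.eventually_lt_const hδ] with k hk x hx
  rw [← hHh hx, dist_comm, dist_eq_norm]
  exact (norm_interval_average_sub_le hγ0 hH (by positivity) x).trans_lt hk

end TendstoHolder

section YoungIntegral

variable {E F G : Type*} [NormedAddCommGroup E] [NormedSpace ℝ E] [NormedAddCommGroup F]
  [NormedSpace ℝ F] [NormedAddCommGroup G] [NormedSpace ℝ G]

/-- `I` is the Young integral `∫_a^b B(f, dg)`; the counterpart of `IsYoungIntegral` for
vector-valued functions paired by a continuous bilinear map `B`. -/
def IsBilinYoungIntegral (B : E →L[ℝ] F →L[ℝ] G) (a b α β : ℝ) (f : ℝ → E) (g : ℝ → F) (I : G) :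
    Prop :=
  ∀ α' β' : ℝ, 0 < α' → α' ≤ α → 0 < β' → β' ≤ β → 1 < α' + β' →
    ∀ (fk : ℕ → ℝ → E) (gk : ℕ → ℝ → F),
      (∀ k, ∃ L : ℝ≥0, LipschitzOnWith L (fk k) (Icc a b)) →
      (∀ k, ∃ L : ℝ≥0, LipschitzOnWith L (gk k) (Icc a b)) →
      TendstoHolder α' a b fk f → TendstoHolder β' a b gk g →
      Tendsto (fun k => ∫ x in a..b, B (fk k x) (deriv (gk k) x)) atTop (𝓝 I)

variable {B : E →L[ℝ] F →L[ℝ] G} {f : ℝ → E} {g : ℝ → F} {Cf Cg α β : ℝ≥0} {I : G}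

theorem tendsto_integral_of_tendstoHolder [FiniteDimensional ℝ F] [CompleteSpace G] (hab : a ≤ b)
    (hf : HolderOnWith Cf α f (Icc a b)) (hg : HolderOnWith Cg β g (Icc a b)) (hαβ : 1 < α + β)
    (hI : Tendsto (dyadicSum B a b f g) atTop (𝓝 I)) {fk : ℕ → ℝ → E} {gk : ℕ → ℝ → F}
    (hfk : ∀ k, ∃ L : ℝ≥0, LipschitzOnWith L (fk k) (Icc a b))
    (hgk : ∀ k, ∃ L : ℝ≥0, LipschitzOnWith L (gk k) (Icc a b))
    (hfkf : TendstoHolder α a b fk f) (hgkg : TendstoHolder β a b gk g) :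
    Tendsto (fun k => ∫ x in a..b, B (fk k x) (deriv (gk k) x)) atTop (𝓝 I) := by
  let A : ℝ≥0 := max Cf ‖f a‖₊
  have hsmall : Tendsto (fun δ : ℝ≥0 => youngConst B a b α β * (δ * (δ + Cg : ℝ≥0) + A * δ))
      (𝓝[>] 0) (𝓝 0) := by
    have : Continuous fun δ : ℝ≥0 => youngConst B a b α β * (δ * (δ + Cg : ℝ≥0) + A * δ) := by
      fun_prop
    simpa using (this.tendsto 0).mono_left nhdsWithin_le_nhds
  refine Metric.tendsto_nhds.2 fun ε hε => ?_
  obtain ⟨δ, hδε, hδ⟩ := ((hsmall.eventually_lt_const hε).and self_mem_nhdsWithin).exists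
  filter_upwards [tendstoHolder_iff.1 hfkf δ hδ, tendstoHolder_iff.1 hgkg δ hδ] with k hfδ hgδ
  obtain ⟨L, hL⟩ := hfk k
  obtain ⟨K, hK⟩ := hgk k
  have hgk' : HolderOnWith (δ + Cg) β (gk k) (Icc a b) := by
    simpa only [sub_add_cancel] using holderOnWith_add hgδ.2 hg
  rw [dist_eq_norm]
  exact (norm_limit_dyadicSum_sub_limit_dyadicSum_le hab hαβ hfδ.2
    (hfδ.1 a (left_mem_Icc.2 hab)) hgk' (hf.mono_const (le_max_left _ _))
    (NNReal.coe_le_coe.2 (le_max_right Cf ‖f a‖₊)) hgδ.2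
    (tendsto_dyadicSum_integral hab hL hK) hI).trans_lt hδε

theorem isBilinYoungIntegral_of_tendsto_dyadicSum [FiniteDimensional ℝ F] [CompleteSpace G]
    (hab : a ≤ b) (hf : HolderOnWith Cf α f (Icc a b)) (hg : HolderOnWith Cg β g (Icc a b))
    (hI : Tendsto (dyadicSum B a b f g) atTop (𝓝 I)) : IsBilinYoungIntegral B a b α β f g I := by
  intro α' β' hα'0 hα' hβ'0 hβ' hαβ fk gk hfk hgk hfkf hgkg
  lift α' to ℝ≥0 using hα'0.le
  lift β' to ℝ≥0 using hβ'0.le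
  obtain ⟨Cf', hf'⟩ := HolderOnWith.exists_holderOnWith_of_le ⟨Cf, hf⟩
    (NNReal.coe_le_coe.1 hα') (Metric.isBounded_Icc a b)
  obtain ⟨Cg', hg'⟩ := HolderOnWith.exists_holderOnWith_of_le ⟨Cg, hg⟩
    (NNReal.coe_le_coe.1 hβ') (Metric.isBounded_Icc a b)
  exact tendsto_integral_of_tendstoHolder hab hf' hg' (by exact_mod_cast hαβ) hI hfk hgk hfkf hgkg

theorem exists_lt_lt_one_lt_add (hα : 0 < α) (hβ : 0 < β) (hαβ : 1 < α + β) :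
    ∃ α' β' : ℝ≥0, 0 < α' ∧ α' < α ∧ 0 < β' ∧ β' < β ∧ 1 < α' + β' := by
  obtain ⟨c, hc, hc1⟩ := exists_between (inv_lt_one_of_one_lt₀ hαβ)
  have hc0 : 0 < c := pos_of_gt hc
  exact ⟨c * α, c * β, mul_pos hc0 hα, mul_lt_of_lt_one_left hα hc1, mul_pos hc0 hβ,
    mul_lt_of_lt_one_left hβ hc1,
    mul_add c α β ▸ (inv_lt_iff_one_lt_mul₀ (add_pos hα hβ)).1 hc⟩

theorem isBilinYoungIntegral_iff_tendsto_dyadicSum [CompleteSpace E] [FiniteDimensional ℝ F]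
    [CompleteSpace G] (hab : a ≤ b) (hα : 0 < α) (hβ : 0 < β) (hαβ : 1 < α + β)
    (hf : HolderOnWith Cf α f (Icc a b)) (hg : HolderOnWith Cg β g (Icc a b)) :
    IsBilinYoungIntegral B a b α β f g I ↔ Tendsto (dyadicSum B a b f g) atTop (𝓝 I) := by
  refine ⟨fun hI => ?_, isBilinYoungIntegral_of_tendsto_dyadicSum hab hf hg⟩
  have := FiniteDimensional.complete ℝ F
  obtain ⟨J, hJ⟩ := exists_tendsto_dyadicSum (B := B) hab hf hg hαβ
  obtain ⟨α', β', hα'0, hα', hβ'0, hβ', hαβ'⟩ := exists_lt_lt_one_lt_add hα hβ hαβ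
  obtain ⟨fk, hfk, hfkf⟩ := exists_lipschitzOnWith_tendstoHolder hab hf hα'
  obtain ⟨gk, hgk, hgkg⟩ := exists_lipschitzOnWith_tendstoHolder hab hg hβ'
  have hlim {K : G} (hK : IsBilinYoungIntegral B a b α β f g K) :
      Tendsto (fun k => ∫ x in a..b, B (fk k x) (deriv (gk k) x)) atTop (𝓝 K) :=
    hK α' β' hα'0 (NNReal.coe_le_coe.2 hα'.le) hβ'0 (NNReal.coe_le_coe.2 hβ'.le)
      (by exact_mod_cast hαβ') fk gk hfk hgk hfkf hgkg
  exact tendsto_nhds_unique (hlim (isBilinYoungIntegral_of_tendsto_dyadicSum hab hf hg hJ))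
    (hlim hI) ▸ hJ

end YoungIntegral

theorem stmt11_general {E F G : Type*} [NormedAddCommGroup E] [NormedSpace ℝ E] [CompleteSpace E]
    [NormedAddCommGroup F] [NormedSpace ℝ F] [FiniteDimensional ℝ F] [NormedAddCommGroup G]
    [NormedSpace ℝ G] [CompleteSpace G] (B : E →L[ℝ] F →L[ℝ] G) {a b α β : ℝ} (hab : a < b)
    (hα : 0 < α) (hβ : 0 < β) (hαβ : 1 < α + β) :
    (∀ (f : ℝ → E) (g : ℝ → F),
      (∃ Cf : ℝ, ∀ x ∈ Icc a b, ∀ y ∈ Icc a b, ‖f x - f y‖ ≤ Cf * |x - y| ^ α) →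
      (∃ Cg : ℝ, ∀ x ∈ Icc a b, ∀ y ∈ Icc a b, ‖g x - g y‖ ≤ Cg * |x - y| ^ β) →
      ∃ I : G, IsBilinYoungIntegral B a b α β f g I) ∧
    (∃ C : ℝ, ∀ (f : ℝ → E) (g : ℝ → F) (ft : ℝ → E) (gt : ℝ → F) (I It : G),
      IsBilinYoungIntegral B a b α β f g I → IsBilinYoungIntegral B a b α β ft gt It →
      ∀ M₁ Mg Mft M₂ : ℝ,
        (∀ x ∈ Icc a b, ‖f x - ft x‖ ≤ M₁) →
        (∀ x ∈ Icc a b, ∀ y ∈ Icc a b,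
          ‖(f x - ft x) - (f y - ft y)‖ ≤ M₁ * |x - y| ^ α) →
        (∀ x ∈ Icc a b, ∀ y ∈ Icc a b, ‖g x - g y‖ ≤ Mg * |x - y| ^ β) →
        (∀ x ∈ Icc a b, ‖ft x‖ ≤ Mft) →
        (∀ x ∈ Icc a b, ∀ y ∈ Icc a b, ‖ft x - ft y‖ ≤ Mft * |x - y| ^ α) →
        (∀ x ∈ Icc a b, ∀ y ∈ Icc a b,
          ‖(g x - gt x) - (g y - gt y)‖ ≤ M₂ * |x - y| ^ β) →
        ‖I - It‖ ≤ C * (M₁ * Mg + Mft * M₂)) := by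
  lift α to ℝ≥0 using hα.le
  lift β to ℝ≥0 using hβ.le
  norm_cast at hα hβ hαβ
  refine ⟨fun f g ⟨Cf, hf⟩ ⟨Cg, hg⟩ => ?_, youngConst B a b α β,
    fun f g ft gt I It hI hIt M₁ Mg Mft M₂ hfa hf hg hfta hft hgt => ?_⟩
  · lift Cf to ℝ≥0 using nonneg_of_norm_sub_le_mul_rpow hab hf
    lift Cg to ℝ≥0 using nonneg_of_norm_sub_le_mul_rpow hab hg
    obtain ⟨I, hI⟩ := exists_tendsto_dyadicSum (B := B) hab.le (holderOnWith_iff_norm_sub_le.2 hf)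
      (holderOnWith_iff_norm_sub_le.2 hg) hαβ
    exact ⟨I, isBilinYoungIntegral_of_tendsto_dyadicSum hab.le (holderOnWith_iff_norm_sub_le.2 hf)
      (holderOnWith_iff_norm_sub_le.2 hg) hI⟩
  · lift M₁ to ℝ≥0 using nonneg_of_norm_sub_le_mul_rpow hab hf
    lift Mg to ℝ≥0 using nonneg_of_norm_sub_le_mul_rpow hab hg
    lift Mft to ℝ≥0 using nonneg_of_norm_sub_le_mul_rpow hab hft
    lift M₂ to ℝ≥0 using nonneg_of_norm_sub_le_mul_rpow hab hgt
    have ha : a ∈ Icc a b := left_mem_Icc.2 hab.le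
    have hfft : HolderOnWith M₁ α (f - ft) (Icc a b) := holderOnWith_iff_norm_sub_le.2 hf
    have hg : HolderOnWith Mg β g (Icc a b) := holderOnWith_iff_norm_sub_le.2 hg
    have hft : HolderOnWith Mft α ft (Icc a b) := holderOnWith_iff_norm_sub_le.2 hft
    have hggt : HolderOnWith M₂ β (g - gt) (Icc a b) := holderOnWith_iff_norm_sub_le.2 hgt
    have hf : HolderOnWith (M₁ + Mft) α f (Icc a b) := by
      simpa only [sub_add_cancel] using holderOnWith_add hfft hft
    have hgt : HolderOnWith (Mg + M₂) β gt (Icc a b) := by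
      simpa only [sub_sub_cancel] using holderOnWith_sub hg hggt
    exact norm_limit_dyadicSum_sub_limit_dyadicSum_le hab.le hαβ hfft (hfa a ha) hg hft
      (hfta a ha) hggt
      ((isBilinYoungIntegral_iff_tendsto_dyadicSum hab.le hα hβ hαβ hf hg).1 hI)
      ((isBilinYoungIntegral_iff_tendsto_dyadicSum hab.le hα hβ hαβ hft hgt).1 hIt)

/-- Proposition 3.11 of the paper, after Young.  For
`f ∈ C^{0,α}([a,b])`, `g ∈ C^{0,β}([a,b])` with `α + β > 1`, the Young integral
`∫_a^b f dg` exists (as the common limit of `∫_a^b f_k g_k'` over all Lipschitz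
approximations in `C^{0,α'}`, `C^{0,β'}`, for any admissible `α' ≤ α`, `β' ≤ β`),
and it satisfies the stability estimate
`|∫ f dg - ∫ f̃ dg̃| ≤ C (‖f-f̃‖_{C^{0,α}} [g]_β + ‖f̃‖_{C^{0,α}} [g-g̃]_β)`. -/
theorem stmt11 (a b : ℝ) (hab : a < b) (α β α' β' : ℝ)
    (hα0 : 0 < α) (hα1 : α ≤ 1) (hβ0 : 0 < β) (hβ1 : β ≤ 1) (hαβ : 1 < α + β)
    (hα'0 : 0 < α') (hα'α : α' ≤ α) (hβ'0 : 0 < β') (hβ'β : β' ≤ β) (hα'β' : 1 < α' + β') :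
    (∀ f g : ℝ → ℝ,
      (∃ Cf : ℝ, ∀ x ∈ Icc a b, ∀ y ∈ Icc a b, |f x - f y| ≤ Cf * |x - y| ^ α) →
      (∃ Cg : ℝ, ∀ x ∈ Icc a b, ∀ y ∈ Icc a b, |g x - g y| ≤ Cg * |x - y| ^ β) →
      ∃ I : ℝ, IsYoungIntegral a b α β f g I) ∧
    (∃ C : ℝ, ∀ f g ft gt : ℝ → ℝ, ∀ I It : ℝ,
      (∃ Cf : ℝ, ∀ x ∈ Icc a b, ∀ y ∈ Icc a b, |f x - f y| ≤ Cf * |x - y| ^ α) →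
      (∃ Cg : ℝ, ∀ x ∈ Icc a b, ∀ y ∈ Icc a b, |g x - g y| ≤ Cg * |x - y| ^ β) →
      (∃ Cf : ℝ, ∀ x ∈ Icc a b, ∀ y ∈ Icc a b, |ft x - ft y| ≤ Cf * |x - y| ^ α) →
      (∃ Cg : ℝ, ∀ x ∈ Icc a b, ∀ y ∈ Icc a b, |gt x - gt y| ≤ Cg * |x - y| ^ β) →
      IsYoungIntegral a b α β f g I → IsYoungIntegral a b α β ft gt It →
      ∀ M₁ Mg Mft M₂ : ℝ,
        (∀ x ∈ Icc a b, |f x - ft x| ≤ M₁) →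
        (∀ x ∈ Icc a b, ∀ y ∈ Icc a b,
          |(f x - ft x) - (f y - ft y)| ≤ M₁ * |x - y| ^ α) →
        (∀ x ∈ Icc a b, ∀ y ∈ Icc a b, |g x - g y| ≤ Mg * |x - y| ^ β) →
        (∀ x ∈ Icc a b, |ft x| ≤ Mft) →
        (∀ x ∈ Icc a b, ∀ y ∈ Icc a b, |ft x - ft y| ≤ Mft * |x - y| ^ α) →
        (∀ x ∈ Icc a b, ∀ y ∈ Icc a b,
          |(g x - gt x) - (g y - gt y)| ≤ M₂ * |x - y| ^ β) →
        |I - It| ≤ C * (M₁ * Mg + Mft * M₂)) := by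
  have h := stmt11_general (ContinuousLinearMap.mul ℝ ℝ) hab hα0 hβ0 hαβ
  exact ⟨h.1, h.2.imp fun C hC f g ft gt I It _ _ _ _ => hC f g ft gt I It⟩
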